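/- arXiv:0904.2353 — 4 statements merged into one kernel-verified Lean document; each statement's English description precedes it below -/
import Mathlib

section
/- Define, for 0 < r < 1, k(r) := −1/(π r log(r²)) + π⁻¹ Σ_{j=0}^∞ ( r^{2j}/(1 − r^{1+2j})² + r^{2j}/(1 − r^{2j+1})² ). Then k(r) = −1/(π r log(r²)) + π⁻¹ (2 + 4r + 8r²) + O(r³) as r → 0⁺; that is, the function r ↦ ( k(r) + 1/(π r log(r²)) − π⁻¹(2 + 4r + 8r²) ) / r³ is bounded on some interval (0, δ) with δ > 0. -/
/-!
Up to the logarithmic term and the factor `2 / π`, `k(r)` is `∑ⱼ qʲ / (1 - x qʲ)²` at `q = r²`,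
`x = r`. Its terms are geometrically small in `q`, uniformly for `x` near `0`, so only
`1 / (1 - r)² + r² / (1 - r³)²` survives modulo `O(q²) = O(r⁴)`. Expanding
`1 / (1 - x)² = ∑ₖ (k + 1) xᵏ` at `x = r` and at `x = r³` gives `(1 + 2r + 3r²) + r² + O(r³)`.
-/

/-- The value `K(√r, √r)` of the Bergman kernel of the annulus `P_r` at the point `√r`. -/
noncomputable def kVal (r : ℝ) : ℝ :=
  -1 / (Real.pi * r * Real.log (r ^ 2)) +
    Real.pi⁻¹ * ∑' j : ℕ,
      (r ^ (2 * j) / (1 - r ^ (1 + 2 * j)) ^ 2 + r ^ (2 * j) / (1 - r ^ (2 * j + 1)) ^ 2)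

open Asymptotics Filter Finset Topology

section GeometricTail

variable {𝕜 : Type*} [NormedField 𝕜]

/-- The sum `∑ⱼ qʲ / (1 - x qʲ)²` over `j ≥ 0`. With `q = r²`, the two sums in the Bergman kernel
of the annulus `P_r` are `annulusSum q (|z|²)` and `r² / |z|⁴ * annulusSum q (r² / |z|²)`; they
coincide at `z = √r`, where `x = r` in both. -/
noncomputable def annulusSum (q x : 𝕜) : 𝕜 :=
  ∑' j : ℕ, q ^ j / (1 - x * q ^ j) ^ 2

theorem norm_pow_div_one_sub_mul_pow_sq_le {q x : 𝕜} (hq : ‖q‖ ≤ 1) (hx : ‖x‖ < 1) (j : ℕ) :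
    ‖q ^ j / (1 - x * q ^ j) ^ 2‖ ≤ ((1 - ‖x‖) ^ 2)⁻¹ * ‖q‖ ^ j := by
  have norm_mul_pow_le : ‖x * q ^ j‖ ≤ ‖x‖ := by
    rw [norm_mul, norm_pow]
    exact mul_le_of_le_one_right (norm_nonneg x) (pow_le_one₀ (norm_nonneg q) hq)
  have le_norm_one_sub : 1 - ‖x‖ ≤ ‖1 - x * q ^ j‖ :=
    calc 1 - ‖x‖ ≤ ‖(1 : 𝕜)‖ - ‖x * q ^ j‖ := by rw [norm_one]; gcongr
      _ ≤ ‖1 - x * q ^ j‖ := norm_sub_norm_le _ _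
  have : 0 < 1 - ‖x‖ := sub_pos.2 hx
  rw [norm_div, norm_pow, norm_pow, div_eq_inv_mul]
  gcongr

theorem hasSum_annulusSum [CompleteSpace 𝕜] {q x : 𝕜} (hq : ‖q‖ < 1) (hx : ‖x‖ < 1) :
    HasSum (fun j : ℕ ↦ q ^ j / (1 - x * q ^ j) ^ 2) (annulusSum q x) :=
  (Summable.of_norm_bounded
    ((summable_geometric_of_lt_one (norm_nonneg q) hq).mul_left _)
    (norm_pow_div_one_sub_mul_pow_sq_le hq.le hx)).hasSum

theorem norm_annulusSum_sub_sum_range_le [CompleteSpace 𝕜] {q x : 𝕜} (hq : ‖q‖ < 1)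
    (hx : ‖x‖ < 1) (n : ℕ) :
    ‖annulusSum q x - ∑ j ∈ range n, q ^ j / (1 - x * q ^ j) ^ 2‖ ≤
      ((1 - ‖x‖) ^ 2)⁻¹ * ‖q‖ ^ n / (1 - ‖q‖) := by
  rw [norm_sub_rev]
  exact norm_sub_le_of_geometric_bound_of_hasSum hq
    (norm_pow_div_one_sub_mul_pow_sq_le hq.le hx) (hasSum_annulusSum hq hx) n

theorem isBigO_annulusSum_sub_sum_range [CompleteSpace 𝕜] (n : ℕ) :
    (fun p : 𝕜 × 𝕜 ↦
      annulusSum p.1 p.2 - ∑ j ∈ range n, p.1 ^ j / (1 - p.2 * p.1 ^ j) ^ 2)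
      =O[𝓝 0] fun p ↦ p.1 ^ n := by
  have eventually_norm_lt : ∀ᶠ p : 𝕜 × 𝕜 in 𝓝 0, ‖p‖ < 1 / 2 := by
    simpa only [sub_zero] using eventually_norm_sub_lt (0 : 𝕜 × 𝕜) one_half_pos
  refine IsBigO.of_bound 8 ?_
  filter_upwards [eventually_norm_lt] with p hp
  have hq : ‖p.1‖ < 1 / 2 := (norm_fst_le p).trans_lt hp
  have hx : ‖p.2‖ < 1 / 2 := (norm_snd_le p).trans_lt hp
  calc
    _ ≤ ((1 - ‖p.2‖) ^ 2)⁻¹ * ‖p.1‖ ^ n / (1 - ‖p.1‖) :=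
      norm_annulusSum_sub_sum_range_le (by linarith) (by linarith) n
    _ ≤ ((1 - 1 / 2) ^ 2)⁻¹ * ‖p.1‖ ^ n / (1 - 1 / 2) := by gcongr
    _ = 8 * ‖p.1 ^ n‖ := by rw [norm_pow]; ring

end GeometricTail

theorem isBigO_one_div_one_sub_sq_sub_sum_range (n : ℕ) :
    (fun x : ℝ ↦ 1 / (1 - x) ^ 2 - ∑ k ∈ range n, (k + 1) * x ^ k) =O[𝓝 0] fun x ↦ x ^ n := by
  have h := Real.one_div_one_sub_sq_hasFPowerSeriesOnBall_zero.hasFPowerSeriesAt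
    |>.isBigO_sub_partialSum_pow n
  simp only [← norm_pow, isBigO_norm_right] at h
  simpa [FormalMultilinearSeries.partialSum, mul_comm] using h

theorem isBigO_annulusSum_sq_self_sub :
    (fun r : ℝ ↦ annulusSum (r ^ 2) r - (1 + 2 * r + 4 * r ^ 2)) =O[𝓝 0] fun r ↦ r ^ 3 := by
  have tail : (fun r : ℝ ↦ annulusSum (r ^ 2) r - (1 / (1 - r) ^ 2 + r ^ 2 / (1 - r ^ 3) ^ 2))
      =O[𝓝 0] fun r ↦ r ^ 3 := by
    have tendsto_params : Tendsto (fun r : ℝ ↦ (r ^ 2, r)) (𝓝 0) (𝓝 0) :=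
      Continuous.tendsto' (by fun_prop) _ _ (by simp)
    have h := (isBigO_annulusSum_sub_sum_range 2).comp_tendsto tendsto_params
    refine .trans (h.congr (fun r ↦ ?_) fun r ↦ (pow_mul r 2 2).symm)
      (isLittleO_pow_pow (by norm_num : 3 < 4)).isBigO
    simp [sum_range_succ, ← pow_succ']
  have zeroth_term : (fun r : ℝ ↦ 1 / (1 - r) ^ 2 - (1 + 2 * r + 3 * r ^ 2))
      =O[𝓝 0] fun r ↦ r ^ 3 := by
    refine (isBigO_one_div_one_sub_sq_sub_sum_range 3).congr_left fun r ↦ ?_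
    norm_num [sum_range_succ]
  have first_term : (fun r : ℝ ↦ r ^ 2 * (1 / (1 - r ^ 3) ^ 2 - 1)) =O[𝓝 0] fun r ↦ r ^ 3 := by
    have tendsto_cube : Tendsto (fun r : ℝ ↦ r ^ 3) (𝓝 0) (𝓝 0) :=
      Continuous.tendsto' (by fun_prop) _ _ (by simp)
    have h := (isBigO_one_div_one_sub_sq_sub_sum_range 1).comp_tendsto tendsto_cube
    have sq_isBigO_one : (fun r : ℝ ↦ r ^ 2) =O[𝓝 0] fun _ ↦ (1 : ℝ) :=
      (continuous_pow 2).continuousAt.tendsto.isBigO_one ℝ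
    simpa [Function.comp_def] using sq_isBigO_one.mul h
  refine ((tail.add zeroth_term).add first_term).congr_left fun r ↦ ?_
  ring

theorem kVal_eq_annulusSum (r : ℝ) :
    kVal r = -1 / (Real.pi * r * Real.log (r ^ 2)) +
      Real.pi⁻¹ * (2 * annulusSum (r ^ 2) r) := by
  have summand_eq (j : ℕ) :
      r ^ (2 * j) / (1 - r ^ (1 + 2 * j)) ^ 2 + r ^ (2 * j) / (1 - r ^ (2 * j + 1)) ^ 2 =
        2 * ((r ^ 2) ^ j / (1 - r * (r ^ 2) ^ j) ^ 2) := by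
    rw [add_comm 1 (2 * j), ← pow_mul, ← pow_succ', ← two_mul]
  rw [kVal, annulusSum, tsum_congr summand_eq, tsum_mul_left]

/-- `k(r) = −1/(π r log(r²)) + π⁻¹(2 + 4r + 8r²) + O(r³)` as `r → 0⁺`. -/
theorem kVal_asymptotics :
    ∃ δ > (0 : ℝ), ∃ C : ℝ, ∀ r : ℝ, 0 < r → r < δ →
      |(kVal r + 1 / (Real.pi * r * Real.log (r ^ 2)) -
          Real.pi⁻¹ * (2 + 4 * r + 8 * r ^ 2)) / r ^ 3| ≤ C := by
  have expansion : (fun r ↦ kVal r + 1 / (Real.pi * r * Real.log (r ^ 2)) -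
      Real.pi⁻¹ * (2 + 4 * r + 8 * r ^ 2)) =O[𝓝 0] fun r ↦ r ^ 3 := by
    refine (isBigO_annulusSum_sq_self_sub.const_mul_left (2 * Real.pi⁻¹)).congr_left fun r ↦ ?_
    rw [kVal_eq_annulusSum]
    ring
  obtain ⟨C, hC⟩ := expansion.bound
  obtain ⟨δ, δ_pos, hδ⟩ := Metric.eventually_nhds_iff.1 hC
  refine ⟨δ, δ_pos, C, fun r r_pos r_lt ↦ ?_⟩
  have bound := hδ (y := r) (by rwa [Real.dist_0_eq_abs, abs_of_pos r_pos])
  rwa [abs_div, div_le_iff₀ (abs_pos.2 (pow_pos r_pos 3).ne')]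
end

section
/- Define, for 0 < r < 1, m(r) := −1/(π r² log(r²)) + π⁻¹ Σ_{j=0}^∞ ( 6 r^{1+6j}/(1 − r^{1+2j})⁴ + 2 r^{4j}/(1 − r^{1+2j})³ + 6 r^{2j−1}/(1 − r^{1+2j})⁴ − 2 r^{2j−1}/(1 − r^{2j+1})³ ). Then m(r) = −1/(π r² log(r²)) + π⁻¹ ( 4/r + 20 + 64 r ) + O(r²) as r → 0⁺. -/
/-- The value `K_{11̄}(√r, √r)` of the mixed second derivative of the Bergman kernel
of the annulus `P_r` at the point `√r`. -/
noncomputable def mVal (r : ℝ) : ℝ :=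
  -1 / (Real.pi * r ^ 2 * Real.log (r ^ 2)) +
    Real.pi⁻¹ * ∑' j : ℕ,
      (6 * r ^ (1 + 6 * (j : ℝ)) / (1 - r ^ (1 + 2 * (j : ℝ))) ^ 4 +
        2 * r ^ (4 * (j : ℝ)) / (1 - r ^ (1 + 2 * (j : ℝ))) ^ 3 +
        6 * r ^ (2 * (j : ℝ) - 1) / (1 - r ^ (1 + 2 * (j : ℝ))) ^ 4 -
        2 * r ^ (2 * (j : ℝ) - 1) / (1 - r ^ (2 * (j : ℝ) + 1)) ^ 3)

/-!
With `x = r ^ (1 + 2 * j)`, the `j`-th term of the series is `4 / r ^ 2 * φ x`, where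
`φ x = x * (1 + x + x ^ 2) / (1 - x) ^ 4 = x + 5 * x ^ 2 + 15 * x ^ 3 + O(x ^ 4)`. As `φ x = O(x)`,
the terms with `j ≥ 2` add up to `O(r ^ 5)`, so up to `O(r ^ 4)` the sum of the `φ x` is
`φ r + φ (r ^ 3) = (r + 5 * r ^ 2 + 15 * r ^ 3) + r ^ 3`.
-/

open Asymptotics Filter Finset Topology

section

variable {E : Type*} [NormedAddCommGroup E] {φ : ℝ → E} {n p q : ℕ}

theorem exists_eventually_norm_comp_pow_le (hn : n ≠ 0) (hp : p ≠ 0) (hq : q ≠ 0)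
    (hφ : φ =O[𝓝[>] 0] (· ^ n)) :
    ∃ C : ℝ, ∀ᶠ r in 𝓝[>] (0 : ℝ), ∀ j : ℕ,
      ‖φ (r ^ (p + q * j))‖ ≤ C * r ^ (n * p) * (1 / 2) ^ j := by
  obtain ⟨C, hC, hφC⟩ := hφ.exists_nonneg
  obtain ⟨δ, hδ, hφδ⟩ := mem_nhdsGT_iff_exists_Ioo_subset.1 hφC.bound
  refine ⟨C, ?_⟩
  filter_upwards [Ioo_mem_nhdsGT hδ, Ioo_mem_nhdsGT (one_half_pos (α := ℝ))]
    with r ⟨hr, hrδ⟩ ⟨_, hr_half⟩ j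
  have hr_one : r ≤ 1 := by linarith
  have hmem : r ^ (p + q * j) ∈ Set.Ioo 0 δ :=
    ⟨by positivity, (pow_le_of_le_one hr.le hr_one (by omega)).trans_lt hrδ⟩
  have hgeom : r ^ (n * q * j) ≤ (1 / 2) ^ j :=
    calc r ^ (n * q * j) ≤ r ^ j :=
          pow_le_pow_of_le_one hr.le hr_one (Nat.le_mul_of_pos_left j (by positivity))
      _ ≤ (1 / 2) ^ j := by gcongr
  calc ‖φ (r ^ (p + q * j))‖ ≤ C * ‖(r ^ (p + q * j)) ^ n‖ := hφδ hmem
    _ = C * r ^ (n * p) * r ^ (n * q * j) := by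
      rw [Real.norm_of_nonneg (by positivity)]
      ring
    _ ≤ C * r ^ (n * p) * (1 / 2) ^ j := by gcongr

theorem eventually_summable_comp_pow [CompleteSpace E] (hn : n ≠ 0) (hp : p ≠ 0) (hq : q ≠ 0)
    (hφ : φ =O[𝓝[>] 0] (· ^ n)) :
    ∀ᶠ r in 𝓝[>] (0 : ℝ), Summable fun j : ℕ => φ (r ^ (p + q * j)) := by
  obtain ⟨C, hC⟩ := exists_eventually_norm_comp_pow_le hn hp hq hφ
  filter_upwards [hC] with r hr
  exact .of_norm_bounded (summable_geometric_two.mul_left _) hr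

theorem isBigO_tsum_comp_pow (hn : n ≠ 0) (hp : p ≠ 0) (hq : q ≠ 0)
    (hφ : φ =O[𝓝[>] 0] (· ^ n)) :
    (fun r => ∑' j : ℕ, φ (r ^ (p + q * j))) =O[𝓝[>] 0] (· ^ (n * p)) := by
  obtain ⟨C, hC⟩ := exists_eventually_norm_comp_pow_le hn hp hq hφ
  refine .of_bound (C * 2) ?_
  filter_upwards [hC, self_mem_nhdsWithin] with r hr (hr_pos : 0 < r)
  rw [Real.norm_of_nonneg (by positivity), mul_right_comm]
  exact tsum_of_norm_bounded (hasSum_geometric_two.mul_left _) hr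

theorem isBigO_tsum_comp_pow_sub_sum_range [CompleteSpace E] (hn : n ≠ 0) (hp : p ≠ 0) (hq : q ≠ 0)
    (hφ : φ =O[𝓝[>] 0] (· ^ n)) (m : ℕ) :
    (fun r => ∑' j : ℕ, φ (r ^ (p + q * j)) - ∑ j ∈ range m, φ (r ^ (p + q * j)))
      =O[𝓝[>] 0] (· ^ (n * (p + q * m))) := by
  refine (isBigO_tsum_comp_pow hn (p := p + q * m) (by omega) hq hφ).congr' ?_ .rfl
  filter_upwards [eventually_summable_comp_pow hn hp hq hφ] with r hr
  rw [← hr.sum_add_tsum_nat_add m, add_sub_cancel_left]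
  simp only [mul_add, add_assoc, add_comm (q * m)]

end

theorem isBigO_mul_of_tendsto {α 𝕜 : Type*} [NormedField 𝕜] {l : Filter α} (f : α → 𝕜) {g : α → 𝕜}
    {c : 𝕜} (hg : Tendsto g l (𝓝 c)) : (fun x => f x * g x) =O[l] f := by
  simpa only [mul_one] using (isBigO_refl f l).mul (hg.isBigO_one 𝕜)

/-- The function `φ` for which the `j`-th term of the series in `mVal r` is
`4 / r ^ 2 * φ (r ^ (1 + 2 * j))`. -/
noncomputable def annulusProfile (x : ℝ) : ℝ :=
  x * (1 + x + x ^ 2) / (1 - x) ^ 4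

theorem annulusProfile_sub_cubic_isBigO :
    (fun x => annulusProfile x - (x + 5 * x ^ 2 + 15 * x ^ 3)) =O[𝓝 0] (· ^ 4) := by
  have hquot : ContinuousAt
      (fun x : ℝ => (34 - 71 * x + 55 * x ^ 2 - 15 * x ^ 3) / (1 - x) ^ 4) 0 :=
    .div (by fun_prop) (by fun_prop) (by simp)
  refine (isBigO_mul_of_tendsto (· ^ 4) hquot).congr' ?_ .rfl
  filter_upwards [eventually_ne_nhds (zero_ne_one (α := ℝ))] with x hx
  have : 1 - x ≠ 0 := sub_ne_zero.2 hx.symm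
  unfold annulusProfile
  field_simp
  ring

theorem annulusProfile_sub_self_isBigO : (fun x => annulusProfile x - x) =O[𝓝 0] (· ^ 2) := by
  have hcontinuous : ContinuousAt (fun x : ℝ => 5 + 15 * x) 0 := by fun_prop
  refine ((annulusProfile_sub_cubic_isBigO.trans
    (isLittleO_pow_pow (by norm_num : 2 < 4)).isBigO).add
      (isBigO_mul_of_tendsto (· ^ 2) hcontinuous)).congr_left fun x => ?_
  ring

theorem annulusProfile_isBigO : annulusProfile =O[𝓝 0] (· ^ 1) := by
  refine ((annulusProfile_sub_self_isBigO.trans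
    (isLittleO_pow_pow one_lt_two).isBigO).add (isBigO_refl (· ^ 1) _)).congr_left fun x => ?_
  ring

theorem tsum_annulusProfile_sub_isBigO :
    (fun r => ∑' j : ℕ, annulusProfile (r ^ (1 + 2 * j)) - (r + 5 * r ^ 2 + 16 * r ^ 3))
      =O[𝓝[>] 0] (· ^ 4) := by
  have htail : (fun r => ∑' j : ℕ, annulusProfile (r ^ (1 + 2 * j)) -
      ∑ j ∈ range 2, annulusProfile (r ^ (1 + 2 * j))) =O[𝓝[>] 0] (· ^ 4) :=
    (isBigO_tsum_comp_pow_sub_sum_range one_ne_zero one_ne_zero two_ne_zero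
      (annulusProfile_isBigO.mono nhdsWithin_le_nhds) 2).trans
      ((isLittleO_pow_pow (by norm_num)).isBigO.mono nhdsWithin_le_nhds)
  have hfirst : (fun r => annulusProfile r - (r + 5 * r ^ 2 + 15 * r ^ 3)) =O[𝓝[>] 0] (· ^ 4) :=
    annulusProfile_sub_cubic_isBigO.mono nhdsWithin_le_nhds
  have hsecond : (fun r => annulusProfile (r ^ 3) - r ^ 3) =O[𝓝[>] 0] (· ^ 4) := by
    have hcube : Tendsto (fun r : ℝ => r ^ 3) (𝓝 0) (𝓝 0) := by
      simpa using (continuous_pow 3).tendsto (0 : ℝ)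
    have hO := annulusProfile_sub_self_isBigO.comp_tendsto hcube
    simp only [Function.comp_def, ← pow_mul] at hO
    exact (hO.trans (isLittleO_pow_pow (by norm_num)).isBigO).mono nhdsWithin_le_nhds
  refine ((htail.add hfirst).add hsecond).congr_left fun r => ?_
  simp only [sum_range_succ, sum_range_zero, mul_zero, mul_one, add_zero, zero_add, pow_one,
    Nat.reduceAdd]
  ring

theorem mVal_term_eq {r : ℝ} (hr₀ : 0 < r) (hr₁ : r < 1) (j : ℕ) :
    6 * r ^ (1 + 6 * (j : ℝ)) / (1 - r ^ (1 + 2 * (j : ℝ))) ^ 4 +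
        2 * r ^ (4 * (j : ℝ)) / (1 - r ^ (1 + 2 * (j : ℝ))) ^ 3 +
        6 * r ^ (2 * (j : ℝ) - 1) / (1 - r ^ (1 + 2 * (j : ℝ))) ^ 4 -
        2 * r ^ (2 * (j : ℝ) - 1) / (1 - r ^ (2 * (j : ℝ) + 1)) ^ 3 =
      4 / r ^ 2 * annulusProfile (r ^ (1 + 2 * j)) := by
  have hne : 1 - r ^ (1 + 2 * j) ≠ 0 :=
    (sub_pos.2 (pow_lt_one₀ hr₀.le hr₁ (by omega))).ne'
  have hpow₂ : r ^ (1 + 2 * (j : ℝ)) = r ^ (1 + 2 * j) := mod_cast Real.rpow_natCast r (1 + 2 * j)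
  have hpow₄ : r ^ (4 * (j : ℝ)) = r ^ (4 * j) := mod_cast Real.rpow_natCast r (4 * j)
  have hpow₆ : r ^ (1 + 6 * (j : ℝ)) = r ^ (1 + 6 * j) := mod_cast Real.rpow_natCast r (1 + 6 * j)
  have hpow_sub_one : r ^ (2 * (j : ℝ) - 1) = r ^ (2 * j) / r := by
    rw [Real.rpow_sub_one hr₀.ne']
    exact_mod_cast congrArg (· / r) (Real.rpow_natCast r (2 * j))
  rw [add_comm (2 * (j : ℝ)) 1, hpow₂, hpow₄, hpow₆, hpow_sub_one, annulusProfile]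
  field_simp
  ring

theorem mVal_eq {r : ℝ} (hr₀ : 0 < r) (hr₁ : r < 1) :
    mVal r = -1 / (Real.pi * r ^ 2 * Real.log (r ^ 2)) +
      Real.pi⁻¹ * (4 / r ^ 2 * ∑' j : ℕ, annulusProfile (r ^ (1 + 2 * j))) := by
  simp only [mVal, mVal_term_eq hr₀ hr₁, tsum_mul_left]

theorem mVal_sub_isBigO :
    (fun r => mVal r + 1 / (Real.pi * r ^ 2 * Real.log (r ^ 2)) -
        Real.pi⁻¹ * (4 / r + 20 + 64 * r)) =O[𝓝[>] 0] (· ^ 2) := by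
  have hO := (isBigO_refl (fun r : ℝ => 4 * Real.pi⁻¹ / r ^ 2) (𝓝[>] 0)).mul
    tsum_annulusProfile_sub_isBigO
  have hscale : (fun r : ℝ => 4 * Real.pi⁻¹ / r ^ 2 * r ^ 4) =O[𝓝[>] 0] (· ^ 2) := by
    refine (isBigO_const_mul_self (4 * Real.pi⁻¹) (· ^ 2) _).congr_left fun r => ?_
    rcases eq_or_ne r 0 with rfl | hr
    · simp
    · field_simp
  refine (hO.trans hscale).congr' ?_ .rfl
  filter_upwards [Ioo_mem_nhdsGT (zero_lt_one (α := ℝ))] with r ⟨hr₀, hr₁⟩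
  rw [mVal_eq hr₀ hr₁, neg_div]
  field_simp
  ring

/-- `m(r) = −1/(π r² log(r²)) + π⁻¹(4/r + 20 + 64r) + O(r²)` as `r → 0⁺`. -/
theorem mVal_asymptotics :
    ∃ δ > (0 : ℝ), ∃ C : ℝ, ∀ r : ℝ, 0 < r → r < δ →
      |(mVal r + 1 / (Real.pi * r ^ 2 * Real.log (r ^ 2)) -
          Real.pi⁻¹ * (4 / r + 20 + 64 * r)) / r ^ 2| ≤ C := by
  obtain ⟨C, hC⟩ := mVal_sub_isBigO.bound
  obtain ⟨δ, hδ, hbound⟩ := mem_nhdsGT_iff_exists_Ioo_subset.1 hC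
  refine ⟨δ, hδ, C, fun r hr hrδ => ?_⟩
  rw [abs_div, div_le_iff₀ (by positivity)]
  exact hbound ⟨hr, hrδ⟩
end

section
/- Define, for 0 < r < 1, n(r) := −4/(π r³ log(r²)) + π⁻¹ Σ_{j=0}^∞ ( 120 r^{10j+2}/(1 − r^{1+2j})⁶ + 96 r^{1+8j}/(1 − r^{1+2j})⁵ + 12 r^{6j}/(1 − r^{1+2j})⁴ + 120 r^{2j−2}/(1 − r^{2j+1})⁶ − 96 r^{2j−2}/(1 − r^{2j+1})⁵ + 12 r^{2j−2}/(1 − r^{2j+1})⁴ ). Then n(r) = −4/(π r³ log(r²)) + π⁻¹ ( 36/r² + 288/r ) + O(1) as r → 0⁺. -/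
/-- The value `K_{111̄1̄}(√r, √r)` of the fourth-order mixed derivative of the Bergman kernel
of the annulus `P_r` at the point `√r`. -/
noncomputable def nVal (r : ℝ) : ℝ :=
  -4 / (Real.pi * r ^ 3 * Real.log (r ^ 2)) +
    Real.pi⁻¹ * ∑' j : ℕ,
      (120 * r ^ (10 * (j : ℝ) + 2) / (1 - r ^ (1 + 2 * (j : ℝ))) ^ 6 +
        96 * r ^ (1 + 8 * (j : ℝ)) / (1 - r ^ (1 + 2 * (j : ℝ))) ^ 5 +
        12 * r ^ (6 * (j : ℝ)) / (1 - r ^ (1 + 2 * (j : ℝ))) ^ 4 +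
        120 * r ^ (2 * (j : ℝ) - 2) / (1 - r ^ (2 * (j : ℝ) + 1)) ^ 6 -
        96 * r ^ (2 * (j : ℝ) - 2) / (1 - r ^ (2 * (j : ℝ) + 1)) ^ 5 +
        12 * r ^ (2 * (j : ℝ) - 2) / (1 - r ^ (2 * (j : ℝ) + 1)) ^ 4)

/-!
Write `q = r ^ (2 * j + 1)`. The `j`-th summand of the series in `nVal r` is
`r ^ (6 * j) * A q + r ^ (2 * j - 2) * B q` with rational functions `A` (`outerTerm`) and
`B` (`innerTerm`) that are regular at `0`. Since `q ≤ r`, the values `A q` and `B q` are bounded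
uniformly in `j` for small `r`, so a geometric series bounds everything except `r ^ (-2) * B r`,
the second part of the summand `j = 0`. The singular part `36 / r ^ 2 + 288 / r` is therefore the
first order Taylor polynomial `36 + 288 * r` of `B`, divided by `r ^ 2`.
-/

open Asymptotics Filter Topology

section PowerSmulSeries

variable {𝕜 E : Type*} [NormedField 𝕜] [NormedAddCommGroup E] [NormedSpace 𝕜 E]
  {f : 𝕜 → E} {l m : ℕ}

lemma exists_eventually_norm_pow_smul_comp_pow_le (hf : f =O[𝓝 0] fun _ ↦ (1 : ℝ))
    (hl : l ≠ 0) (hm : m ≠ 0) (k : ℕ) :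
    ∃ C, ∀ᶠ x in 𝓝 (0 : 𝕜), ∀ j : ℕ,
      ‖x ^ (m * j) • f (x ^ (k * j + l))‖ ≤ C * (1 / 2) ^ j := by
  obtain ⟨C, hC⟩ := hf.bound
  obtain ⟨δ, hδ, hfC⟩ := Metric.eventually_nhds_iff_ball.1 hC
  refine ⟨C, ?_⟩
  filter_upwards [Metric.ball_mem_nhds 0 hδ, Metric.ball_mem_nhds 0 one_half_pos] with x hxδ hx j
  rw [mem_ball_zero_iff] at hxδ hx
  have hx_one : ‖x‖ ≤ 1 := by linarith
  have hpow : ‖x ^ (m * j)‖ ≤ (1 / 2) ^ j := by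
    rw [norm_pow, pow_mul]
    gcongr
    exact (pow_le_of_le_one (norm_nonneg x) hx_one hm).trans hx.le
  have harg : ‖x ^ (k * j + l)‖ < δ := by
    rw [norm_pow]
    exact (pow_le_of_le_one (norm_nonneg x) hx_one (by lia)).trans_lt hxδ
  have hfx : ‖f (x ^ (k * j + l))‖ ≤ C := by
    simpa using hfC _ (mem_ball_zero_iff.2 harg)
  calc ‖x ^ (m * j) • f (x ^ (k * j + l))‖
      = ‖x ^ (m * j)‖ * ‖f (x ^ (k * j + l))‖ := norm_smul _ _
    _ ≤ (1 / 2) ^ j * C := by gcongr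
    _ = C * (1 / 2) ^ j := mul_comm _ _

lemma eventually_summable_pow_smul_comp_pow [CompleteSpace E]
    (hf : f =O[𝓝 0] fun _ ↦ (1 : ℝ)) (hl : l ≠ 0) (hm : m ≠ 0) (k : ℕ) :
    ∀ᶠ x in 𝓝 (0 : 𝕜), Summable fun j : ℕ ↦ x ^ (m * j) • f (x ^ (k * j + l)) := by
  obtain ⟨C, hC⟩ := exists_eventually_norm_pow_smul_comp_pow_le hf hl hm k
  filter_upwards [hC] with x hx
  exact .of_norm_bounded (summable_geometric_two.mul_left C) hx

lemma tsum_pow_smul_comp_pow_isBigO_one (hf : f =O[𝓝 0] fun _ ↦ (1 : ℝ))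
    (hl : l ≠ 0) (hm : m ≠ 0) (k : ℕ) :
    (fun x : 𝕜 ↦ ∑' j : ℕ, x ^ (m * j) • f (x ^ (k * j + l))) =O[𝓝 0] fun _ ↦ (1 : ℝ) := by
  obtain ⟨C, hC⟩ := exists_eventually_norm_pow_smul_comp_pow_le hf hl hm k
  refine .of_bound (C * 2) ?_
  filter_upwards [hC] with x hx
  simpa using tsum_of_norm_bounded (hasSum_geometric_two.mul_left C) hx

end PowerSmulSeries

/-- The mixed derivative `∂_z² ∂_w̄²` of `(1 - z w̄)⁻²` as a function of `q = z w̄`. The term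
`r²ʲ (1 - r²ʲ z w̄)⁻²` of `π` times the Bergman kernel of the annulus contributes
`r⁶ʲ * outerTerm (r²ʲ z w̄)`. -/
noncomputable def outerTerm (q : ℝ) : ℝ :=
  120 * q ^ 2 / (1 - q) ^ 6 + 96 * q / (1 - q) ^ 5 + 12 / (1 - q) ^ 4

/-- The mixed derivative `∂_z² ∂_w̄²` of `(z w̄ - c)⁻²`, multiplied by `(z w̄)⁴`, as a function of
`q = c / (z w̄)`. The term `c (z w̄ - c)⁻²` of `π` times the Bergman kernel of the annulus,
with `c = r²ʲ⁺²`, contributes `r²ʲ⁻² * innerTerm (r²ʲ⁺¹)` at `z = w = √r`. -/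
noncomputable def innerTerm (q : ℝ) : ℝ :=
  120 / (1 - q) ^ 6 - 96 / (1 - q) ^ 5 + 12 / (1 - q) ^ 4

lemma outerTerm_isBigO_one : outerTerm =O[𝓝 0] fun _ ↦ (1 : ℝ) := by
  have hcont : ContinuousAt outerTerm 0 := by
    unfold outerTerm
    fun_prop (disch := norm_num)
  exact hcont.tendsto.isBigO_one ℝ

lemma innerTerm_isBigO_one : innerTerm =O[𝓝 0] fun _ ↦ (1 : ℝ) := by
  have hcont : ContinuousAt innerTerm 0 := by
    unfold innerTerm
    fun_prop (disch := norm_num)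
  exact hcont.tendsto.isBigO_one ℝ

lemma innerTerm_sub_isBigO_sq :
    (fun q ↦ innerTerm q - (36 + 288 * q)) =O[𝓝 0] fun q ↦ q ^ 2 := by
  -- `innerTerm q = (36 + 72 q + 12 q²) / (1 - q)⁶`; the numerator of `R` is
  -- `36 + 72 q + 12 q² - (36 + 288 q) (1 - q)⁶`, divided by `q²`.
  let R : ℝ → ℝ := fun q ↦
    (1200 - 3600 * q + 5220 * q ^ 2 - 4104 * q ^ 3 + 1692 * q ^ 4 - 288 * q ^ 5) / (1 - q) ^ 6
  have hR : R =O[𝓝 0] fun _ ↦ (1 : ℝ) := by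
    have hcont : ContinuousAt R 0 := by fun_prop (disch := norm_num)
    exact hcont.tendsto.isBigO_one ℝ
  have hfactor : (fun q ↦ innerTerm q - (36 + 288 * q)) =ᶠ[𝓝 0] fun q ↦ q ^ 2 * R q := by
    filter_upwards [eventually_ne_nhds (zero_ne_one' ℝ)] with q hq
    have hq' : 1 - q ≠ 0 := sub_ne_zero.2 hq.symm
    simp only [innerTerm, R]
    field_simp
    ring
  exact hfactor.trans_isBigO (by simpa using (isBigO_refl (fun q : ℝ ↦ q ^ 2) (𝓝 0)).mul hR)

lemma tsum_innerTerm_sub_isBigO_sq :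
    (fun r : ℝ ↦ ∑' j : ℕ, r ^ (2 * j) * innerTerm (r ^ (2 * j + 1)) - (36 + 288 * r))
      =O[𝓝 0] fun r ↦ r ^ 2 := by
  have htail : (fun r : ℝ ↦ r ^ 2 * ∑' j : ℕ, r ^ (2 * j) * innerTerm (r ^ (2 * j + 3)))
      =O[𝓝 0] fun r ↦ r ^ 2 := by
    simpa using (isBigO_refl (fun r : ℝ ↦ r ^ 2) (𝓝 0)).mul
      (tsum_pow_smul_comp_pow_isBigO_one innerTerm_isBigO_one three_ne_zero two_ne_zero 2)
  refine (innerTerm_sub_isBigO_sq.add htail).congr' ?_ .rfl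
  filter_upwards [eventually_summable_pow_smul_comp_pow innerTerm_isBigO_one one_ne_zero
    two_ne_zero 2] with r hsum
  simp only [smul_eq_mul] at hsum
  have hshift (j : ℕ) : r ^ (2 * (j + 1)) * innerTerm (r ^ (2 * (j + 1) + 1)) =
      r ^ 2 * (r ^ (2 * j) * innerTerm (r ^ (2 * j + 3))) := by
    ring_nf
  rw [hsum.tsum_eq_zero_add]
  simp only [hshift, tsum_mul_left, mul_zero, pow_zero, zero_add, pow_one, one_mul]
  ring

lemma tsum_innerTerm_div_sq_sub_isBigO_one :
    (fun r : ℝ ↦ (∑' j : ℕ, r ^ (2 * j) * innerTerm (r ^ (2 * j + 1))) / r ^ 2 -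
      (36 / r ^ 2 + 288 / r)) =O[𝓝[>] 0] fun _ ↦ (1 : ℝ) := by
  refine ((tsum_innerTerm_sub_isBigO_sq.mono nhdsWithin_le_nhds).mul
    (isBigO_refl (fun r : ℝ ↦ (r ^ 2)⁻¹) _)).congr' ?_ ?_
  all_goals filter_upwards [self_mem_nhdsWithin] with r (hr : 0 < r)
  · field_simp
  · exact mul_inv_cancel₀ (pow_ne_zero 2 hr.ne')

lemma nVal_eq_tsum {r : ℝ} (hr : 0 < r) :
    nVal r = -4 / (Real.pi * r ^ 3 * Real.log (r ^ 2)) + Real.pi⁻¹ *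
      ∑' j : ℕ, (r ^ (6 * j) * outerTerm (r ^ (2 * j + 1)) +
        r ^ (2 * j) * innerTerm (r ^ (2 * j + 1)) / r ^ 2) := by
  unfold nVal
  congr! 4 with j
  have hq : r ^ (2 * (j : ℝ) + 1) = r ^ (2 * j + 1) := mod_cast Real.rpow_natCast r (2 * j + 1)
  have hpow_ten : r ^ (10 * (j : ℝ) + 2) = r ^ (6 * j) * (r ^ (2 * j + 1)) ^ 2 := by
    rw [show 10 * (j : ℝ) + 2 = (10 * j + 2 : ℕ) by push_cast; rfl, Real.rpow_natCast]
    ring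
  have hpow_eight : r ^ (1 + 8 * (j : ℝ)) = r ^ (6 * j) * r ^ (2 * j + 1) := by
    rw [show 1 + 8 * (j : ℝ) = (1 + 8 * j : ℕ) by push_cast; rfl, Real.rpow_natCast]
    ring
  have hpow_six : r ^ (6 * (j : ℝ)) = r ^ (6 * j) := mod_cast Real.rpow_natCast r (6 * j)
  have hpow_two : r ^ (2 * (j : ℝ) - 2) = r ^ (2 * j) / r ^ 2 := by
    rw [Real.rpow_sub hr]
    exact_mod_cast congrArg₂ (· / ·) (Real.rpow_natCast r (2 * j)) (Real.rpow_natCast r 2)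
  rw [add_comm 1 (2 * (j : ℝ)), hq, hpow_ten, hpow_eight, hpow_six, hpow_two]
  simp only [outerTerm, innerTerm]
  ring

lemma nVal_eventuallyEq_add_tsum :
    nVal =ᶠ[𝓝[>] 0] fun r ↦ -4 / (Real.pi * r ^ 3 * Real.log (r ^ 2)) + Real.pi⁻¹ *
      (∑' j : ℕ, r ^ (6 * j) * outerTerm (r ^ (2 * j + 1)) +
        (∑' j : ℕ, r ^ (2 * j) * innerTerm (r ^ (2 * j + 1))) / r ^ 2) := by
  filter_upwards [self_mem_nhdsWithin,
    (eventually_summable_pow_smul_comp_pow outerTerm_isBigO_one one_ne_zero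
      (OfNat.ofNat_ne_zero 6) 2).filter_mono nhdsWithin_le_nhds,
    (eventually_summable_pow_smul_comp_pow innerTerm_isBigO_one one_ne_zero
      two_ne_zero 2).filter_mono nhdsWithin_le_nhds] with r (hr : 0 < r) hsum_outer hsum_inner
  simp only [smul_eq_mul] at hsum_outer hsum_inner
  rw [nVal_eq_tsum hr, hsum_outer.tsum_add (hsum_inner.div_const _), tsum_div_const]

/-- `n(r) = −4/(π r³ log(r²)) + π⁻¹(36/r² + 288/r) + O(1)` as `r → 0⁺`. -/
theorem nVal_asymptotics :
    ∃ δ > (0 : ℝ), ∃ C : ℝ, ∀ r : ℝ, 0 < r → r < δ →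
      |nVal r + 4 / (Real.pi * r ^ 3 * Real.log (r ^ 2)) -
          Real.pi⁻¹ * (36 / r ^ 2 + 288 / r)| ≤ C := by
  have houter := (tsum_pow_smul_comp_pow_isBigO_one outerTerm_isBigO_one one_ne_zero
    (OfNat.ofNat_ne_zero 6) 2).mono (nhdsWithin_le_nhds (s := Set.Ioi 0))
  have hbounded : (fun r ↦ nVal r + 4 / (Real.pi * r ^ 3 * Real.log (r ^ 2)) -
      Real.pi⁻¹ * (36 / r ^ 2 + 288 / r)) =O[𝓝[>] 0] fun _ ↦ (1 : ℝ) := by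
    refine ((houter.add tsum_innerTerm_div_sq_sub_isBigO_one).const_mul_left
      Real.pi⁻¹).congr' ?_ .rfl
    filter_upwards [nVal_eventuallyEq_add_tsum] with r hr
    simp only [hr, smul_eq_mul]
    ring
  obtain ⟨C, hC⟩ := hbounded.bound
  obtain ⟨δ, hδ, hbound⟩ := mem_nhdsGT_iff_exists_Ioo_subset.1 hC
  exact ⟨δ, hδ, C, fun r hr hrδ ↦ by simpa using hbound ⟨hr, hrδ⟩⟩
end

section
/- Define, for 0 < r < 1, l(r) := 1/(π r^{3/2} log(r²)) + π⁻¹ Σ_{j=0}^∞ ( 2 r^{1/2+4j}/(1 − r^{1+2j})³ − 2 r^{−1/2+2j}/(1 − r^{2j+1})³ ). Then l(r) = 1/(π r^{3/2} log(r²)) + π⁻¹ ( −2 r^{−1/2} − 4 r^{1/2} − 8 r^{3/2} ) + O(r^{5/2}) as r → 0⁺. -/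
/-- The value `K_1(√r, √r)` of the first derivative of the Bergman kernel
of the annulus `P_r` at the point `√r`. -/
noncomputable def lVal (r : ℝ) : ℝ :=
  1 / (Real.pi * r ^ ((3 : ℝ) / 2) * Real.log (r ^ 2)) +
    Real.pi⁻¹ * ∑' j : ℕ,
      (2 * r ^ ((1 : ℝ) / 2 + 4 * (j : ℝ)) / (1 - r ^ (1 + 2 * (j : ℝ))) ^ 3 -
        2 * r ^ (-(1 : ℝ) / 2 + 2 * (j : ℝ)) / (1 - r ^ (2 * (j : ℝ) + 1)) ^ 3)

/-!
With `q = r ^ (2 * j + 1)`, the two fractions in the `j`-th summand of `lVal` are proportional to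
`q / (1 - q) ^ 3` and `1 / (1 - q) ^ 3`, so their difference loses one power of the denominator and
the sum becomes `-2 * r ^ (-1 / 2)` times the Lambert-type series
`∑ r ^ (2 * j) / (1 - r ^ (2 * j + 1)) ^ 2`. That series is dominated by a geometric series of ratio
`r ^ 2`, so up to `O(r ^ 4)` only the terms `j = 0, 1` matter; expanding `1 / (1 - q) ^ 2` in these
two terms gives `1 + 2 * r + 4 * r ^ 2 + O(r ^ 3)`.
-/

open Asymptotics Filter Topology

section Taylor

theorem one_sub_sq_mul_sum_range {R : Type*} [CommRing R] (q : R) (n : ℕ) :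
    (1 - q) ^ 2 * ∑ k ∈ Finset.range n, (k + 1) * q ^ k = 1 - q ^ n * (n + 1 - n * q) := by
  induction n with
  | zero => simp
  | succ n ih =>
    rw [Finset.sum_range_succ, mul_add, ih]
    push_cast
    ring

theorem one_div_one_sub_sq_sub_sum_range_isBigO {𝕜 : Type*} [NormedField 𝕜] (n : ℕ) :
    (fun q : 𝕜 ↦ 1 / (1 - q) ^ 2 - ∑ k ∈ Finset.range n, (k + 1) * q ^ k) =O[𝓝 0]
      fun q ↦ q ^ n := by
  have remainder_eq : ∀ᶠ q : 𝕜 in 𝓝 0,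
      q ^ n * ((n + 1 - n * q) / (1 - q) ^ 2) =
        1 / (1 - q) ^ 2 - ∑ k ∈ Finset.range n, (k + 1) * q ^ k := by
    filter_upwards [eventually_ne_nhds zero_ne_one] with q hq
    have one_sub_ne_zero : 1 - q ≠ 0 := sub_ne_zero.2 hq.symm
    field_simp
    rw [one_sub_sq_mul_sum_range]
    ring
  have cofactor_isBigO : (fun q : 𝕜 ↦ (n + 1 - n * q) / (1 - q) ^ 2) =O[𝓝 0] fun _ ↦ (1 : 𝕜) := by
    have : ContinuousAt (fun q : 𝕜 ↦ (n + 1 - n * q) / (1 - q) ^ 2) 0 := by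
      fun_prop (disch := simp)
    exact this.tendsto.isBigO_one 𝕜
  simpa using ((isBigO_refl (fun q : 𝕜 ↦ q ^ n) _).mul cofactor_isBigO).congr' remainder_eq .rfl

end Taylor

section OddLambertSeries

variable {𝕜 : Type*} [NormedField 𝕜]

/-- The Lambert series `∑ q ^ d / (1 - q ^ d) ^ 2` over odd `d`, divided by `q` so that its
constant term is `1`. Up to an elementary factor, it is the sum occurring in `lVal`. -/
noncomputable def oddLambertSeries (q : 𝕜) : 𝕜 :=
  ∑' j : ℕ, q ^ (2 * j) / (1 - q ^ (2 * j + 1)) ^ 2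

theorem norm_oddLambertSeries_term_le {q : 𝕜} (hq : ‖q‖ < 1) (j : ℕ) :
    ‖q ^ (2 * j) / (1 - q ^ (2 * j + 1)) ^ 2‖ ≤ 1 / (1 - ‖q‖) ^ 2 * (‖q‖ ^ 2) ^ j := by
  have one_sub_norm_le : 1 - ‖q‖ ≤ ‖1 - q ^ (2 * j + 1)‖ :=
    calc 1 - ‖q‖ ≤ 1 - ‖q‖ ^ (2 * j + 1) :=
          sub_le_sub_left (pow_le_of_le_one (norm_nonneg q) hq.le (by simp)) 1
      _ = ‖(1 : 𝕜)‖ - ‖q ^ (2 * j + 1)‖ := by rw [norm_one, norm_pow]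
      _ ≤ ‖1 - q ^ (2 * j + 1)‖ := norm_sub_norm_le _ _
  calc ‖q ^ (2 * j) / (1 - q ^ (2 * j + 1)) ^ 2‖
      = ‖q‖ ^ (2 * j) / ‖1 - q ^ (2 * j + 1)‖ ^ 2 := by rw [norm_div, norm_pow, norm_pow]
    _ ≤ ‖q‖ ^ (2 * j) / (1 - ‖q‖) ^ 2 :=
        div_le_div_of_nonneg_left (by positivity) (pow_pos (sub_pos.2 hq) 2)
          (pow_le_pow_left₀ (sub_pos.2 hq).le one_sub_norm_le 2)
    _ = 1 / (1 - ‖q‖) ^ 2 * (‖q‖ ^ 2) ^ j := by rw [one_div_mul_eq_div, pow_mul]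

variable [CompleteSpace 𝕜]

theorem hasSum_oddLambertSeries {q : 𝕜} (hq : ‖q‖ < 1) :
    HasSum (fun j : ℕ ↦ q ^ (2 * j) / (1 - q ^ (2 * j + 1)) ^ 2) (oddLambertSeries q) := by
  have sq_lt_one : ‖q‖ ^ 2 < 1 := pow_lt_one₀ (norm_nonneg q) hq two_ne_zero
  have majorant_summable := (summable_geometric_of_lt_one (sq_nonneg ‖q‖) sq_lt_one).mul_left
    (1 / (1 - ‖q‖) ^ 2)
  exact (majorant_summable.of_norm_bounded (norm_oddLambertSeries_term_le hq)).hasSum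

theorem norm_sum_range_sub_oddLambertSeries_le {q : 𝕜} (hq : ‖q‖ < 1) (n : ℕ) :
    ‖∑ j ∈ Finset.range n, q ^ (2 * j) / (1 - q ^ (2 * j + 1)) ^ 2 - oddLambertSeries q‖ ≤
      1 / (1 - ‖q‖) ^ 2 * (‖q‖ ^ 2) ^ n / (1 - ‖q‖ ^ 2) :=
  norm_sub_le_of_geometric_bound_of_hasSum (pow_lt_one₀ (norm_nonneg q) hq two_ne_zero)
    (norm_oddLambertSeries_term_le hq) (hasSum_oddLambertSeries hq) n

theorem oddLambertSeries_sub_sum_range_isBigO (n : ℕ) :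
    (fun q : 𝕜 ↦ oddLambertSeries q -
      ∑ j ∈ Finset.range n, q ^ (2 * j) / (1 - q ^ (2 * j + 1)) ^ 2) =O[𝓝 0]
      fun q ↦ q ^ (2 * n) := by
  let c : 𝕜 → ℝ := fun q ↦ 1 / (1 - ‖q‖) ^ 2 / (1 - ‖q‖ ^ 2)
  have norm_le : ∀ᶠ q : 𝕜 in 𝓝 0, ‖oddLambertSeries q -
      ∑ j ∈ Finset.range n, q ^ (2 * j) / (1 - q ^ (2 * j + 1)) ^ 2‖ ≤ ‖q ^ (2 * n)‖ * c q := by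
    filter_upwards [Metric.ball_mem_nhds (0 : 𝕜) one_pos] with q hq
    rw [norm_sub_rev, norm_pow, pow_mul]
    exact (norm_sum_range_sub_oddLambertSeries_le (mem_ball_zero_iff.1 hq) n).trans_eq (by ring)
  have c_isBigO : c =O[𝓝 0] fun _ ↦ (1 : ℝ) := by
    have : ContinuousAt c 0 := by fun_prop (disch := simp)
    exact this.tendsto.isBigO_one ℝ
  have product_isBigO := (isBigO_refl (fun q : 𝕜 ↦ ‖q ^ (2 * n)‖) (𝓝 0)).mul c_isBigO
  simp only [mul_one] at product_isBigO
  exact (IsBigO.of_norm_eventuallyLE norm_le).trans product_isBigO.of_norm_right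

theorem oddLambertSeries_sub_isBigO :
    (fun q : 𝕜 ↦ oddLambertSeries q - (1 + 2 * q + 4 * q ^ 2)) =O[𝓝 0] fun q ↦ q ^ 3 := by
  have tail := (oddLambertSeries_sub_sum_range_isBigO (𝕜 := 𝕜) 2).trans
    (isLittleO_pow_pow (show 3 < 2 * 2 by norm_num)).isBigO
  have term_zero := one_div_one_sub_sq_sub_sum_range_isBigO (𝕜 := 𝕜) 3
  have term_one : (fun q : 𝕜 ↦ q ^ 2 * (1 / (1 - q ^ 3) ^ 2 - 1)) =O[𝓝 0] fun q ↦ q ^ 3 := by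
    have cube_tendsto : Tendsto (fun q : 𝕜 ↦ q ^ 3) (𝓝 0) (𝓝 0) := by
      simpa using (continuous_pow 3).tendsto (0 : 𝕜)
    have inner_isBigO : (fun q : 𝕜 ↦ 1 / (1 - q ^ 3) ^ 2 - 1) =O[𝓝 0] fun q ↦ q ^ 3 := by
      simpa [Function.comp_def] using
        (one_div_one_sub_sq_sub_sum_range_isBigO (𝕜 := 𝕜) 1).comp_tendsto cube_tendsto
    have sq_isBigO : (fun q : 𝕜 ↦ q ^ 2) =O[𝓝 0] fun _ ↦ (1 : 𝕜) :=
      ((continuous_pow 2).tendsto (0 : 𝕜)).isBigO_one 𝕜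
    simpa using sq_isBigO.mul inner_isBigO
  refine ((tail.add term_zero).add term_one).congr_left fun q ↦ ?_
  simp only [Finset.sum_range_succ, Finset.sum_range_zero]
  push_cast
  ring

end OddLambertSeries

section LVal

variable {r : ℝ}

theorem lVal_summand_eq (h0 : 0 < r) (h1 : r < 1) (j : ℕ) :
    2 * r ^ ((1 : ℝ) / 2 + 4 * (j : ℝ)) / (1 - r ^ (1 + 2 * (j : ℝ))) ^ 3 -
        2 * r ^ (-(1 : ℝ) / 2 + 2 * (j : ℝ)) / (1 - r ^ (2 * (j : ℝ) + 1)) ^ 3 =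
      -2 * r ^ (-(1 : ℝ) / 2) * (r ^ (2 * j) / (1 - r ^ (2 * j + 1)) ^ 2) := by
  have odd_pow : r ^ (2 * (j : ℝ) + 1) = r ^ (2 * j + 1) := by
    exact_mod_cast Real.rpow_natCast r (2 * j + 1)
  have first_numerator : r ^ ((1 : ℝ) / 2 + 4 * (j : ℝ)) =
      r ^ (-(1 : ℝ) / 2) * (r ^ (2 * j) * r ^ (2 * j + 1)) := by
    rw [← pow_add, ← Real.rpow_add_natCast h0.ne']
    congr 1
    push_cast
    ring
  have second_numerator : r ^ (-(1 : ℝ) / 2 + 2 * (j : ℝ)) =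
      r ^ (-(1 : ℝ) / 2) * r ^ (2 * j) := by
    rw [← Real.rpow_add_natCast h0.ne']
    push_cast
    rfl
  have one_sub_ne_zero : 1 - r ^ (2 * j + 1) ≠ 0 :=
    (sub_pos.2 (pow_lt_one₀ h0.le h1 (by simp))).ne'
  rw [add_comm 1 (2 * (j : ℝ)), odd_pow, first_numerator, second_numerator]
  generalize r ^ (2 * j + 1) = q at *
  field_simp
  ring

theorem lVal_eq_oddLambertSeries (h0 : 0 < r) (h1 : r < 1) :
    lVal r = 1 / (Real.pi * r ^ ((3 : ℝ) / 2) * Real.log (r ^ 2)) +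
      Real.pi⁻¹ * (-2 * r ^ (-(1 : ℝ) / 2) * oddLambertSeries r) := by
  rw [lVal, tsum_congr (lVal_summand_eq h0 h1), tsum_mul_left, oddLambertSeries]

theorem lVal_sub_expansion_eq (h0 : 0 < r) (h1 : r < 1) :
    lVal r - 1 / (Real.pi * r ^ ((3 : ℝ) / 2) * Real.log (r ^ 2)) -
        Real.pi⁻¹ * (-2 * r ^ (-(1 : ℝ) / 2) - 4 * r ^ ((1 : ℝ) / 2) - 8 * r ^ ((3 : ℝ) / 2)) =
      -2 * Real.pi⁻¹ *
        (r ^ (-(1 : ℝ) / 2) * (oddLambertSeries r - (1 + 2 * r + 4 * r ^ 2))) := by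
  have rpow_half : r ^ ((1 : ℝ) / 2) = r ^ (-(1 : ℝ) / 2) * r := by
    rw [← Real.rpow_add_one h0.ne']
    norm_num
  have rpow_three_halves : r ^ ((3 : ℝ) / 2) = r ^ (-(1 : ℝ) / 2) * r ^ 2 := by
    rw [← Real.rpow_add_natCast h0.ne']
    norm_num
  rw [lVal_eq_oddLambertSeries h0 h1, add_sub_cancel_left, rpow_half, rpow_three_halves]
  ring

theorem lVal_sub_expansion_isBigO :
    (fun r : ℝ ↦ lVal r - 1 / (Real.pi * r ^ ((3 : ℝ) / 2) * Real.log (r ^ 2)) -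
        Real.pi⁻¹ * (-2 * r ^ (-(1 : ℝ) / 2) - 4 * r ^ ((1 : ℝ) / 2) - 8 * r ^ ((3 : ℝ) / 2)))
      =O[𝓝[>] 0] fun r ↦ r ^ ((5 : ℝ) / 2) := by
  have series_isBigO :
      (fun r : ℝ ↦ oddLambertSeries r - (1 + 2 * r + 4 * r ^ 2)) =O[𝓝[>] 0] fun r ↦ r ^ 3 :=
    oddLambertSeries_sub_isBigO.mono nhdsWithin_le_nhds
  have scaled_isBigO := ((isBigO_refl (fun r : ℝ ↦ r ^ (-(1 : ℝ) / 2)) (𝓝[>] 0)).mul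
    series_isBigO).const_mul_left (-2 * Real.pi⁻¹)
  refine scaled_isBigO.congr' ?_ ?_
  · filter_upwards [Ioo_mem_nhdsGT one_pos] with r ⟨h0, h1⟩
    exact (lVal_sub_expansion_eq h0 h1).symm
  · filter_upwards [self_mem_nhdsWithin] with r (h0 : 0 < r)
    rw [← Real.rpow_add_natCast h0.ne']
    norm_num

end LVal

/-- `l(r) = 1/(π r^{3/2} log(r²)) + π⁻¹(−2r^{−1/2} − 4r^{1/2} − 8r^{3/2}) + O(r^{5/2})`
as `r → 0⁺`. -/
theorem lVal_asymptotics :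
    ∃ δ > (0 : ℝ), ∃ C : ℝ, ∀ r : ℝ, 0 < r → r < δ →
      |(lVal r - 1 / (Real.pi * r ^ ((3 : ℝ) / 2) * Real.log (r ^ 2)) -
          Real.pi⁻¹ * (-2 * r ^ (-(1 : ℝ) / 2) - 4 * r ^ ((1 : ℝ) / 2) -
            8 * r ^ ((3 : ℝ) / 2))) / r ^ ((5 : ℝ) / 2)| ≤ C := by
  obtain ⟨C, hC⟩ := lVal_sub_expansion_isBigO.bound
  obtain ⟨δ, hδ, bound⟩ := mem_nhdsGT_iff_exists_Ioo_subset.1 hC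
  refine ⟨δ, hδ, C, fun r h0 hrδ ↦ ?_⟩
  have rpow_pos : 0 < r ^ ((5 : ℝ) / 2) := Real.rpow_pos_of_pos h0 _
  rw [abs_div, abs_of_pos rpow_pos, div_le_iff₀ rpow_pos]
  simpa only [Set.mem_ofPred_eq, Real.norm_eq_abs, abs_of_pos rpow_pos] using bound ⟨h0, hrδ⟩
end
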